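/- For every positive integer t, consider the instance with men M = {m₁,…,m_t} and women W = {w₁,…,w_{2t}}, acceptable pairs A = {(m_i, w_i), (m_i, w_{i+t}) : 1 ≤ i ≤ t}, where each man m_i is indifferent between w_i and w_{i+t} and each woman's list consists only of m_i. Then μ = {(m_i, w_i) : 1 ≤ i ≤ t} and μ' = {(m_i, w_{i+t}) : 1 ≤ i ≤ t} are stable matchings, and the distance between x_μ and x_μ' in the graph on extreme points of P_SMT with adjacency as edges is exactly t = ⌊(|M|+|W|)/3⌋. -/

import Mathlib

/-!
A stable matching of the tight instance selects exactly one of the two women of each man, so stable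
matchings correspond to functions `c : Fin t → Bool` (`choiceMatching`, `exists_choice_of_stable`)
and the polytope is combinatorially a `t`-cube.

Adjacency is adjacency in the cube. If `c` and `d` differ at two places, exchanging their values at
one of these places gives two other stable matchings with the same midpoint
(`eq_of_adjacent`). If they differ only at `i`, then every stable matching of positive weight
in a decomposition of the midpoint avoids the pairs avoided by both, hence agrees with `c` away
from `i` (`adjacent_of_differ_at`).

Switching the men one at a time gives a path of length `t`. Conversely each edge switches
only one man, so after `j` edges from the all-`false` matching at most `j` men have switched.
-/

open scoped Classical

/-- An instance of the stable marriage problem with ties: men `M`, women `W`,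
acceptable pairs `Acc`, and for each man (resp. woman) a total preorder on the
acceptable partners. `mle m w w'` means `w ≤_m w'`, `wle w m m'` means `m ≤_w m'`. -/
structure SMTI (M W : Type*) where
  Acc : Set (M × W)
  mle : M → W → W → Prop
  wle : W → M → M → Prop
  mle_refl : ∀ m w, (m, w) ∈ Acc → mle m w w
  mle_trans : ∀ m w₁ w₂ w₃, mle m w₁ w₂ → mle m w₂ w₃ → mle m w₁ w₃
  mle_total : ∀ m w w', (m, w) ∈ Acc → (m, w') ∈ Acc → mle m w w' ∨ mle m w' w
  mle_mem : ∀ m w w', mle m w w' → (m, w) ∈ Acc ∧ (m, w') ∈ Acc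
  wle_refl : ∀ w m, (m, w) ∈ Acc → wle w m m
  wle_trans : ∀ w m₁ m₂ m₃, wle w m₁ m₂ → wle w m₂ m₃ → wle w m₁ m₃
  wle_total : ∀ w m m', (m, w) ∈ Acc → (m', w) ∈ Acc → wle w m m' ∨ wle w m' m
  wle_mem : ∀ w m m', wle w m m' → (m, w) ∈ Acc ∧ (m', w) ∈ Acc

namespace SMTI

variable {M W : Type*} (I : SMTI M W)

/-- `≤_m` extended to `Option W`, where `none` (being single) is strictly below
every acceptable partner. -/
def mleO (m : M) : Option W → Option W → Prop
  | none, none => True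
  | none, some w => (m, w) ∈ I.Acc
  | some _, none => False
  | some w, some w' => I.mle m w w'

/-- `≤_w` extended to `Option M`. -/
def wleO (w : W) : Option M → Option M → Prop
  | none, none => True
  | none, some m => (m, w) ∈ I.Acc
  | some _, none => False
  | some m, some m' => I.wle w m m'

/-- strict version of `mleO` -/
def mltO (m : M) (a b : Option W) : Prop := I.mleO m a b ∧ ¬ I.mleO m b a

/-- strict version of `wleO` -/
def wltO (w : W) (a b : Option M) : Prop := I.wleO w a b ∧ ¬ I.wleO w b a

/-- A matching: a set of acceptable pairs in which every man and every woman
occurs at most once. -/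
def IsMatching (μ : Set (M × W)) : Prop :=
  μ ⊆ I.Acc ∧ (∀ m w w', (m, w) ∈ μ → (m, w') ∈ μ → w = w') ∧
    (∀ m m' w, (m, w) ∈ μ → (m', w) ∈ μ → m = m')

/-- the partner `μ(m)` of a man `m` (`none` if `m` is single) -/
noncomputable def mpartner (μ : Set (M × W)) (m : M) : Option W :=
  if h : ∃ w, (m, w) ∈ μ then some h.choose else none

/-- the partner `μ(w)` of a woman `w` (`none` if `w` is single) -/
noncomputable def wpartner (μ : Set (M × W)) (w : W) : Option M :=
  if h : ∃ m, (m, w) ∈ μ then some h.choose else none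

/-- A stable matching: no acceptable pair is blocking. -/
def IsStable (μ : Set (M × W)) : Prop :=
  I.IsMatching μ ∧ ∀ p ∈ I.Acc,
    I.mleO p.1 (some p.2) (mpartner μ p.1) ∨ I.wleO p.2 (some p.1) (wpartner μ p.2)

/-- `between_m(a, b, c)` -/
def betweenM (m : M) (a b c : Option W) : Prop :=
  a = b ∨ a = c ∨ (I.mltO m b a ∧ I.mleO m a c) ∨ (I.mltO m c a ∧ I.mleO m a b)

/-- `between_w(a, b, c)` -/
def betweenW (w : W) (a b c : Option M) : Prop :=
  a = b ∨ a = c ∨ (I.wltO w b a ∧ I.wleO w a c) ∨ (I.wltO w c a ∧ I.wleO w a b)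

/-- the (directed) edge relation of the marriage graph `Γ` -/
def gammaEdge (p q : M × W) : Prop :=
  p ∈ I.Acc ∧ q ∈ I.Acc ∧
    ((p.1 = q.1 ∧ p.2 ≠ q.2 ∧ I.mle p.1 p.2 q.2) ∨
      (p.2 = q.2 ∧ p.1 ≠ q.1 ∧ I.wle p.2 p.1 q.1))

/-- the vertex set of `Γ*(μ, μ')` -/
noncomputable def starV (μ μ' : Set (M × W)) : Set (M × W) :=
  {p | p ∈ I.Acc ∧
    I.betweenM p.1 (some p.2) (mpartner μ p.1) (mpartner μ' p.1) ∧
    I.betweenW p.2 (some p.1) (wpartner μ p.2) (wpartner μ' p.2)}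

/-- undirected adjacency inside the subgraph of `Γ` induced by the vertex set `S` -/
def adjIn (S : Set (M × W)) (p q : M × W) : Prop :=
  p ∈ S ∧ q ∈ S ∧ (I.gammaEdge p q ∨ I.gammaEdge q p)

/-- `p` and `q` lie in the same weakly connected component of the subgraph of `Γ`
induced by `S` -/
def connIn (S : Set (M × W)) (p q : M × W) : Prop :=
  p ∈ S ∧ q ∈ S ∧ Relation.ReflTransGen (I.adjIn S) p q

/-- `p` is an isolated vertex of the subgraph of `Γ` induced by `S` -/
def IsIsolated (S : Set (M × W)) (p : M × W) : Prop :=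
  p ∈ S ∧ ∀ q, ¬ I.adjIn S p q

/-- `C` is a nontrivial weakly connected component of the subgraph of `Γ`
induced by `S` -/
def IsNontrivialComp (S : Set (M × W)) (C : Set (M × W)) : Prop :=
  (∃ v ∈ S, C = {u | I.connIn S v u}) ∧ ¬ C.Subsingleton

/-- `B` is the vertex set of a principal block (`P^m` or `P^w`) of the subgraph
of `Γ` induced by `S` -/
def IsPrincipalBlock (S : Set (M × W)) (B : Set (M × W)) : Prop :=
  (∃ m : M, B = {p ∈ S | p.1 = m}) ∨ (∃ w : W, B = {p ∈ S | p.2 = w})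

/-- characteristic vector `x_ν ∈ ℝ^A` of a set of pairs -/
noncomputable def chi (ν : Set (M × W)) : M × W → ℝ := fun p => if p ∈ ν then 1 else 0

/-- standard basis vector `e_v` -/
noncomputable def eVec (v : M × W) : M × W → ℝ := fun p => if p = v then 1 else 0

/-- dot product on `ℝ^{M × W}` -/
noncomputable def dotP [Fintype M] [Fintype W] (α x : M × W → ℝ) : ℝ := ∑ p, α p * x p

/-- `E`: the span of all vectors `α` (supported on the acceptable pairs) for which
there is `β` so that `α · x ≥ β` is valid for all stable matchings and tight at
both `μ` and `μ'`. -/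
noncomputable def Espace [Fintype M] [Fintype W] (μ μ' : Set (M × W)) :
    Submodule ℝ (M × W → ℝ) :=
  Submodule.span ℝ {α | (∀ p, p ∉ I.Acc → α p = 0) ∧ ∃ β : ℝ,
    (∀ ν, I.IsStable ν → β ≤ dotP α (chi ν)) ∧
    dotP α (chi μ) = β ∧ dotP α (chi μ') = β}

/-- `a` is linked to `b`: `E` contains `λ e_a + γ e_b` with `λ ≠ 0`. -/
def linked [Fintype M] [Fintype W] (μ μ' : Set (M × W)) (a b : M × W) : Prop :=
  ∃ l g : ℝ, l ≠ 0 ∧ l • eVec a + g • eVec b ∈ I.Espace μ μ'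

/-- `x_μ` and `x_μ'` are adjacent extreme points of `P_SMT`: they are distinct, and
whenever their midpoint is a convex combination of extreme points (characteristic
vectors of stable matchings), only `x_μ` and `x_μ'` get nonzero weight. -/
def AdjacentSM [Fintype M] [Fintype W] (μ μ' : Set (M × W)) : Prop :=
  chi μ ≠ chi μ' ∧
  ∀ (T : Finset (Set (M × W))) (c : Set (M × W) → ℝ),
    (∀ ν ∈ T, I.IsStable ν) → (∀ ν ∈ T, 0 ≤ c ν) → (∑ ν ∈ T, c ν) = 1 →
    (∑ ν ∈ T, c ν • chi ν) = (2⁻¹ : ℝ) • (chi μ + chi μ') →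
    ∀ ν ∈ T, c ν ≠ 0 → chi ν = chi μ ∨ chi ν = chi μ'

end SMTI

/-- The tight-example instance: men `Fin t`, women `Fin t × Bool` (where `(i, false)`
plays the role of `w_i` and `(i, true)` the role of `w_{i+t}`); man `i` finds exactly
`(i, false)` and `(i, true)` acceptable and is indifferent between them, and each
woman `(i, b)` accepts only man `i`. -/
def tightInstance (t : ℕ) : SMTI (Fin t) (Fin t × Bool) where
  Acc := {p | p.2.1 = p.1}
  mle := fun m w w' => w.1 = m ∧ w'.1 = m
  wle := fun w m m' => m = w.1 ∧ m' = w.1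
  mle_refl := fun _ _ h => ⟨h, h⟩
  mle_trans := fun _ _ _ _ h h' => ⟨h.1, h'.2⟩
  mle_total := fun _ _ _ h h' => Or.inl ⟨h, h'⟩
  mle_mem := fun _ _ _ h => ⟨h.1, h.2⟩
  wle_refl := fun _ _ h => ⟨h.symm, h.symm⟩
  wle_trans := fun _ _ _ _ h h' => ⟨h.1, h'.2⟩
  wle_total := fun _ _ _ h h' => Or.inl ⟨h.symm, h'.symm⟩
  wle_mem := fun _ _ _ h => ⟨h.1.symm, h.2.symm⟩

namespace SMTI

/-- The matching of the tight instance in which man `i` is married to the woman `(i, c i)`. -/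
def choiceMatching {t : ℕ} (c : Fin t → Bool) : Set (Fin t × (Fin t × Bool)) :=
  {p | p.2 = (p.1, c p.1)}

theorem mem_choiceMatching {t : ℕ} (c : Fin t → Bool) (i j : Fin t) (b : Bool) :
    (i, (j, b)) ∈ choiceMatching c ↔ j = i ∧ b = c i := by
  simp [choiceMatching]

theorem choiceMatching_injective {t : ℕ} :
    Function.Injective (choiceMatching : (Fin t → Bool) → Set (Fin t × (Fin t × Bool))) := by
  intro c d h
  funext i
  have h1 : (i, (i, c i)) ∈ choiceMatching d := h ▸ (mem_choiceMatching c i i (c i)).2 ⟨rfl, rfl⟩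
  exact ((mem_choiceMatching d i i (c i)).1 h1).2

theorem chi_injective {M W : Type*} :
    Function.Injective (chi : Set (M × W) → M × W → ℝ) := by
  intro μ ν h
  ext p
  have hp := congrFun h p
  by_cases h1 : p ∈ μ <;> by_cases h2 : p ∈ ν <;> simp [chi, h1, h2] at hp ⊢

theorem mem_of_mpartner {M W : Type*} {μ : Set (M × W)} {m : M} {w : W}
    (h : mpartner μ m = some w) : (m, w) ∈ μ := by
  unfold mpartner at h
  split_ifs at h with h1
  have h2 := h1.choose_spec
  rwa [Option.some.inj h] at h2

theorem mem_of_wpartner {M W : Type*} {μ : Set (M × W)} {m : M} {w : W}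
    (h : wpartner μ w = some m) : (m, w) ∈ μ := by
  unfold wpartner at h
  split_ifs at h with h1
  have h2 := h1.choose_spec
  rwa [Option.some.inj h] at h2

theorem stable_choiceMatching {t : ℕ} (c : Fin t → Bool) :
    (tightInstance t).IsStable (choiceMatching c) := by
  refine ⟨⟨?_, ?_, ?_⟩, ?_⟩
  · rintro ⟨i, j, b⟩ h
    exact ((mem_choiceMatching c i j b).1 h).1
  · intro m w w' h h'
    exact Eq.trans h (Eq.symm h')
  · rintro m m' ⟨j, b⟩ h h'
    exact ((mem_choiceMatching c m j b).1 h).1.symm.trans ((mem_choiceMatching c m' j b).1 h').1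
  · rintro ⟨i, j, b⟩ h
    left
    have hmem : ∃ w, (i, w) ∈ choiceMatching c := ⟨(i, c i), rfl⟩
    have h1 : mpartner (choiceMatching c) i = some hmem.choose := dif_pos hmem
    have h2 : hmem.choose = (i, c i) := hmem.choose_spec
    show (tightInstance t).mleO i (some (j, b)) (mpartner (choiceMatching c) i)
    rw [h1, h2]
    exact ⟨h, rfl⟩

/-- In a stable matching every man is married: otherwise the women on his list, who know nobody
else, are single too and block. -/
theorem exists_choice_of_stable {t : ℕ} {ν : Set (Fin t × (Fin t × Bool))}
    (h : (tightInstance t).IsStable ν) : ∃ c, ν = choiceMatching c := by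
  obtain ⟨⟨hA, hm, hw⟩, hs⟩ := h
  have hex : ∀ i : Fin t, ∃ b, (i, (i, b)) ∈ ν := by
    intro i
    rcases hs (i, (i, true)) rfl with h1 | h1
    · cases h2 : mpartner ν i with
      | none => simp only [h2] at h1; exact h1.elim
      | some w =>
        have h3 := mem_of_mpartner h2
        have h4 : w.1 = i := hA h3
        exact ⟨w.2, by rw [← h4] at h3 ⊢; exact h3⟩
    · cases h2 : wpartner ν (i, true) with
      | none => simp only [h2] at h1; exact h1.elim
      | some m =>
        have h3 := mem_of_wpartner h2
        have h4 : i = m := hA h3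
        exact ⟨true, by rw [← h4] at h3; exact h3⟩
  choose c hc using hex
  refine ⟨c, ?_⟩
  ext ⟨i, j, b⟩
  rw [mem_choiceMatching]
  constructor
  · intro h
    have := hm _ _ _ h (hc i)
    exact ⟨congrArg Prod.fst this, congrArg Prod.snd this⟩
  · rintro ⟨rfl, rfl⟩
    exact hc _

theorem chi_choiceMatching {t : ℕ} (c : Fin t → Bool) (i j : Fin t) (b : Bool) :
    chi (choiceMatching c) (i, (j, b)) = if j = i ∧ b = c i then 1 else 0 := by
  simp only [chi, mem_choiceMatching]

theorem adjacent_of_differ_at {t : ℕ} {c d : Fin t → Bool} (i : Fin t) (hi : c i ≠ d i)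
    (h : ∀ j, j ≠ i → c j = d j) :
    (tightInstance t).AdjacentSM (choiceMatching c) (choiceMatching d) := by
  refine ⟨fun e => hi (congrFun (choiceMatching_injective (chi_injective e)) i), ?_⟩
  intro T w hT hw _ hmid ν hν hne
  obtain ⟨e, rfl⟩ := exists_choice_of_stable (hT ν hν)
  have key : ∀ j, j ≠ i → e j = c j := by
    intro j hj
    by_contra hej
    -- The coordinate `(j, (j, e j))` of the midpoint vanishes.
    have h0 := congrFun hmid (j, (j, e j))
    have hdj : e j ≠ d j := h j hj ▸ hej
    simp only [Finset.sum_apply, Pi.smul_apply, Pi.add_apply, chi_choiceMatching, hej, hdj,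
      and_false, if_false, add_zero, smul_zero] at h0
    have hnn : ∀ ν ∈ T, 0 ≤ w ν • chi ν (j, (j, e j)) := by
      intro ν hν
      refine mul_nonneg (hw ν hν) ?_
      unfold chi
      split_ifs <;> norm_num
    have h1 := (Finset.sum_eq_zero_iff_of_nonneg hnn).1 h0 _ hν
    simp [chi_choiceMatching] at h1
    exact hne h1
  by_cases hei : e i = c i
  · left
    congr 2
    funext j
    by_cases hj : j = i
    · rw [hj, hei]
    · exact key j hj
  · right
    congr 2
    funext j
    by_cases hj : j = i
    · subst hj
      revert hi hei
      cases e j <;> cases c j <;> cases d j <;> simp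
    · rw [key j hj, h j hj]

/-- Matchings adjacent in the polytope differ in the choice of at most one man. -/
theorem eq_of_adjacent {t : ℕ} {c d : Fin t → Bool}
    (h : (tightInstance t).AdjacentSM (choiceMatching c) (choiceMatching d))
    {i j : Fin t} (hi : c i ≠ d i) (hj : c j ≠ d j) : i = j := by
  by_contra hij
  let c' := Function.update c i (d i)
  let d' := Function.update d i (c i)
  have hci : c' i = d i := by simp [c']
  have hcj : c' j = c j := Function.update_of_ne (Ne.symm hij) _ _
  have hdj : d' j = d j := Function.update_of_ne (Ne.symm hij) _ _
  have hne : choiceMatching c' ≠ choiceMatching d' := by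
    intro e
    have := congrFun (choiceMatching_injective e) j
    rw [hcj, hdj] at this
    exact hj this
  have hsum : chi (choiceMatching c') + chi (choiceMatching d')
      = chi (choiceMatching c) + chi (choiceMatching d) := by
    funext ⟨k, l, b⟩
    simp only [Pi.add_apply, chi_choiceMatching]
    by_cases hk : k = i
    · subst hk
      simp only [c', d', Function.update_self]
      exact add_comm _ _
    · simp only [c', d', Function.update_of_ne hk]
  have := h.2 {choiceMatching c', choiceMatching d'} (fun _ => 2⁻¹)
    (by
      intro ν hν
      rcases Finset.mem_insert.1 hν with rfl | hν
      · exact stable_choiceMatching _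
      · rw [Finset.mem_singleton.1 hν]
        exact stable_choiceMatching _)
    (fun _ _ => by norm_num)
    (by rw [Finset.sum_pair hne]; norm_num)
    (by rw [Finset.sum_pair hne, ← smul_add, hsum])
    (choiceMatching c') (Finset.mem_insert_self _ _) (by norm_num)
  rcases this with e | e
  · have := congrFun (choiceMatching_injective (chi_injective e)) i
    rw [hci] at this
    exact hi this.symm
  · have := congrFun (choiceMatching_injective (chi_injective e)) j
    rw [hcj] at this
    exact hj this

end SMTI

open SMTI in
theorem stmt17 (t : ℕ) (ht : 0 < t) :
    (tightInstance t).IsStable {p | p.2 = (p.1, false)} ∧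
    (tightInstance t).IsStable {p | p.2 = (p.1, true)} ∧
    t = (Fintype.card (Fin t) + Fintype.card (Fin t × Bool)) / 3 ∧
    (∃ f : ℕ → Set (Fin t × (Fin t × Bool)),
      f 0 = {p | p.2 = (p.1, false)} ∧ f t = {p | p.2 = (p.1, true)} ∧
      (∀ j ≤ t, (tightInstance t).IsStable (f j)) ∧
      ∀ j < t, (tightInstance t).AdjacentSM (f j) (f (j + 1))) ∧
    ∀ (k : ℕ) (f : ℕ → Set (Fin t × (Fin t × Bool))),
      f 0 = {p | p.2 = (p.1, false)} → f k = {p | p.2 = (p.1, true)} →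
      (∀ j ≤ k, (tightInstance t).IsStable (f j)) →
      (∀ j < k, (tightInstance t).AdjacentSM (f j) (f (j + 1))) →
      t ≤ k := by
  refine ⟨stable_choiceMatching fun _ => false, stable_choiceMatching fun _ => true, ?_,
    ⟨fun j => choiceMatching fun i => decide (i.val < j), ?_, ?_, ?_, ?_⟩, ?_⟩
  · simp only [Fintype.card_prod, Fintype.card_fin, Fintype.card_bool]
    omega
  · simp [choiceMatching]
  · simp [choiceMatching]
  · exact fun j _ => stable_choiceMatching _
  · intro j hj
    refine adjacent_of_differ_at ⟨j, hj⟩ (by simp) ?_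
    intro i hi
    have : i.val ≠ j := fun e => hi (Fin.ext e)
    rw [decide_eq_decide]
    omega
  · intro k f h0 hk hs ha
    have key : ∀ j ≤ k, ∃ c, f j = choiceMatching c ∧
        (Finset.univ.filter fun i => c i = true).card ≤ j := by
      intro j
      induction j with
      | zero => exact fun _ => ⟨fun _ => false, h0, by simp⟩
      | succ j ih =>
        intro hj
        obtain ⟨c, hc, hcard⟩ := ih (by omega)
        obtain ⟨d, hd⟩ := exists_choice_of_stable (hs (j + 1) hj)
        refine ⟨d, hd, ?_⟩
        have hadj := ha j (by omega)
        rw [hc, hd] at hadj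
        obtain ⟨i, hi⟩ : ∃ i, c i ≠ d i := by
          by_contra! hall
          exact hadj.1 (by rw [funext hall])
        have hsub : (Finset.univ.filter fun i => d i = true) ⊆
            insert i (Finset.univ.filter fun i => c i = true) := by
          intro l hl
          simp only [Finset.mem_insert, Finset.mem_filter, Finset.mem_univ, true_and] at hl ⊢
          by_cases hcl : c l = d l
          · exact Or.inr (hcl.trans hl)
          · exact Or.inl (eq_of_adjacent hadj hcl hi)
        have h1 := Finset.card_le_card hsub
        have h2 := Finset.card_insert_le i (Finset.univ.filter fun i => c i = true)
        omega
    obtain ⟨c, hc, hcard⟩ := key k le_rfl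
    have hct : c = fun _ => true := choiceMatching_injective (hc.symm.trans hk)
    subst hct
    simpa using hcard
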